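/- (Correctness of the algorithm expressing concordance vectors as pure wedge products.) Let σ be a non-crossing partition of {1̄,…,n̄} with dual σ̃ and merged partition (σ|σ̃). For each block B = {j_1 < j_2 < … < j_k} of (σ|σ̃) with k ≥ 2 and each 1 ≤ l ≤ k−1, form the pair (j_l, j_{l+1}). Then: (i) there are exactly n−1 such pairs in total and their first coordinates are pairwise distinct; (ii) listing these pairs as (a_1,b_1),…,(a_{n−1},b_{n−1}) with a_1 < a_2 < … < a_{n−1}, and setting ε_r := (−1)^{m_r} where m_r is the number of integers t with a_r < t < b_r and t ≡ a_r (mod 2), one has w_σ = (e_{a_1} + ε_1 e_{b_1}) ∧ (e_{a_2} + ε_2 e_{b_2}) ∧ … ∧ (e_{a_{n−1}} + ε_{n−1} e_{b_{n−1}}) in ⋀^{n-1}ℝ^{2n}. -/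

import Mathlib

open scoped Classical

noncomputable section

/-- `P` is a set partition of the finite ground set `G` (of integers): its blocks are nonempty
subsets of `G`, and every element of `G` lies in exactly one block. -/
def IsPartitionOf (G : Finset ℕ) (P : Finset (Finset ℕ)) : Prop :=
  (∀ B ∈ P, B.Nonempty) ∧ (∀ B ∈ P, B ⊆ G) ∧ ∀ x ∈ G, ∃! B, B ∈ P ∧ x ∈ B

/-- A collection of blocks is non-crossing: there are no `a < b < c < d` with `a, c` in one
block and `b, d` in a different block. -/
def NonCrossing (P : Finset (Finset ℕ)) : Prop :=
  ∀ a b c d : ℕ, a < b → b < c → c < d →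
    ∀ B₁ ∈ P, ∀ B₂ ∈ P, a ∈ B₁ → c ∈ B₁ → b ∈ B₂ → d ∈ B₂ → B₁ = B₂

/-- The set `{1, 3, …, 2n-1}` of "barred" boundary indices `k̄ = 2k-1`. -/
def oddSet (n : ℕ) : Finset ℕ := (Finset.range n).image fun k => 2 * k + 1

/-- The set `{2, 4, …, 2n}` of "tilde" boundary indices `k̃ = 2k`. -/
def evenSet (n : ℕ) : Finset ℕ := (Finset.range n).image fun k => 2 * k + 2

/-- `σ` is a non-crossing partition of `{1̄,…,n̄}` and `σd` is its dual: a non-crossing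
partition of `{1̃,…,ñ}` such that the merged partition `σ ∪ σd` is non-crossing and the
numbers of blocks add up to `n + 1`. -/
def IsNCPair (n : ℕ) (σ σd : Finset (Finset ℕ)) : Prop :=
  IsPartitionOf (oddSet n) σ ∧ NonCrossing σ ∧
    IsPartitionOf (evenSet n) σd ∧ NonCrossing σd ∧
    NonCrossing (σ ∪ σd) ∧ σ.card + σd.card = n + 1

/-- An `(n-1)`-element subset `I ⊆ {1,…,2n}` is concordant with `σ` if every block of `σ`
and every block of the dual `σd` contains exactly one element not in `I`. -/
def ConcordantWith (σ σd : Finset (Finset ℕ)) (I : Finset ℕ) : Prop :=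
  ∀ B ∈ σ ∪ σd, (B \ I).card = 1

/-- `stdE n i` is the `i`-th standard basis vector (1-indexed) of `ℝ^{2n}`. -/
def stdE (n i : ℕ) : Fin (2 * n) → ℝ := fun t => if (t : ℕ) + 1 = i then 1 else 0

/-- The wedge `e_{i_1} ∧ … ∧ e_{i_k}` over the increasing enumeration `i_1 < … < i_k`
of a finite set `I` of (1-indexed) indices. -/
def finsetWedge (n k : ℕ) (I : Finset ℕ) : ExteriorAlgebra ℝ (Fin (2 * n) → ℝ) :=
  ExteriorAlgebra.ιMulti ℝ k fun p => stdE n ((I.sort (· ≤ ·)).getD p.val 0)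

/-- The concordance vector `w_σ = Σ_I e_I ∈ ⋀^{n-1} ℝ^{2n}`, the sum over all
`(n-1)`-element subsets `I` of `{1,…,2n}` concordant with `σ`. -/
def concVec (n : ℕ) (σ σd : Finset (Finset ℕ)) : ExteriorAlgebra ℝ (Fin (2 * n) → ℝ) :=
  ∑ I ∈ ((Finset.Icc 1 (2 * n)).powersetCard (n - 1)).filter (ConcordantWith σ σd),
    finsetWedge n (n - 1) I

end
noncomputable section

/-- The consecutive pairs `(j_l, j_{l+1})` of a block, in increasing order. -/
def blockPairs (B : Finset ℕ) : Finset (ℕ × ℕ) :=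
  ((B.sort (· ≤ ·)).zip (B.sort (· ≤ ·)).tail).toFinset

/-- All consecutive pairs of all blocks of a collection of blocks. -/
def pairsOf (P : Finset (Finset ℕ)) : Finset (ℕ × ℕ) := P.sup blockPairs

end

/-!
Expanding the wedge product gives one term for each choice of an endpoint of every arc
`(a_r, b_r)`. Choices with a repeated endpoint vanish, and the others correspond bijectively to the
concordant sets: in each block, the arcs before the omitted element choose their left endpoint and
the arcs after it their right endpoint.

Since the arcs do not cross, the chosen endpoints are out of order exactly for the pairs formed by
an arc choosing its right endpoint and an arc nested inside it. Sorting a choice therefore costs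
the product of the signs `(-1)^{c_r}` over the arcs choosing `b_r`, where `c_r` is the number of
arcs nested inside `(a_r, b_r)`.

It remains to see that `c_r = m_r = (b_r - a_r) / 2 - 1`. The unit intervals `[a_r, a_r + 1]` and
`[b_r - 1, b_r]` are pairwise distinct because the arcs do not cross and have even length. They are
`2 (n - 1)` of the `2 n - 1` unit intervals in `[1, 2n]`, so at most one of the `b_r - a_r`
intervals under a given arc is missed; the `2 (c_r + 1)` others come from the arc itself and the
arcs nested inside it, and parity shows that none is missed.
-/

section ArcSystem

open Finset

variable {ι α : Type*} [LinearOrder ι] [LinearOrder α] {a b : ι → α}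

/-- A system of pairwise non-crossing arcs `(a r, b r)`, indexed in increasing order of the left
endpoints. Two arcs may share a point only as right endpoint of one and left endpoint of the
other; injectivity of `b` is part of the strict inequality in `nested`. -/
structure IsArcSystem (a b : ι → α) : Prop where
  strictMono : StrictMono a
  lt : ∀ r, a r < b r
  nested : ∀ ⦃q r⦄, q < r → a r < b q → b r < b q

namespace IsArcSystem

theorem right_injective (h : IsArcSystem a b) : Function.Injective b := by
  refine Function.Injective.of_lt_imp_ne fun q r hqr hb => ?_
  exact (h.nested hqr (hb ▸ h.lt r)).ne' hb

theorem piecewise_lt_piecewise_iff (h : IsArcSystem a b) {s : Finset ι}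
    (hs : Function.Injective (s.piecewise a b)) {q r : ι} (hqr : q < r) :
    s.piecewise a b q < s.piecewise a b r ↔ q ∈ s ∨ b q ≤ a r := by
  have hle : a r ≤ s.piecewise a b r := s.piecewise_cases a b (a r ≤ ·) le_rfl (h.lt r).le
  by_cases hq : q ∈ s
  · have hlt : a q < s.piecewise a b r := (h.strictMono hqr).trans_le hle
    simpa [hq] using hlt
  · have hne : s.piecewise a b q ≠ s.piecewise a b r := hs.ne hqr.ne
    rw [s.piecewise_eq_of_notMem a b hq] at hne ⊢
    simp only [hq, false_or]
    refine ⟨fun hlt => ?_, fun hba => (hba.trans hle).lt_of_ne hne⟩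
    by_contra! hcross
    have hunder : s.piecewise a b r < b q :=
      s.piecewise_cases a b (· < b q) hcross (h.nested hqr hcross)
    exact hlt.not_gt hunder

theorem mem_iff_left_mem_image_piecewise [Fintype ι] (h : IsArcSystem a b) {s : Finset ι}
    (hs : Function.Injective (s.piecewise a b)) (r : ι) :
    r ∈ s ↔ a r ∈ univ.image (s.piecewise a b) ∧ ∀ q < r, q ∉ s → b q ≠ a r := by
  constructor
  · intro hr
    refine ⟨mem_image.mpr ⟨r, mem_univ r, by simp [hr]⟩, fun q hqr hq hba => ?_⟩
    exact hqr.ne (hs (by simp [hq, hr, hba]))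
  · rintro ⟨hmem, hne⟩
    obtain ⟨q, -, hq⟩ := mem_image.mp hmem
    by_cases hqs : q ∈ s
    · rw [s.piecewise_eq_of_mem a b hqs] at hq
      exact h.strictMono.injective hq ▸ hqs
    · rw [s.piecewise_eq_of_notMem a b hqs] at hq
      exact absurd hq (hne q (h.strictMono.lt_iff_lt.mp (hq ▸ h.lt q)) hqs)

theorem injOn_image_piecewise [Fintype ι] (h : IsArcSystem a b) :
    Set.InjOn (fun s : Finset ι => univ.image (s.piecewise a b))
      {s | Function.Injective (s.piecewise a b)} := by
  intro s hs t ht (hst : univ.image (s.piecewise a b) = univ.image (t.piecewise a b))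
  ext r
  induction r using WellFoundedLT.induction with
  | _ r ih =>
    rw [h.mem_iff_left_mem_image_piecewise hs, h.mem_iff_left_mem_image_piecewise ht, hst]
    exact and_congr_right fun _ => forall₂_congr fun q hq => by rw [ih q hq]

end IsArcSystem

/-- The indices of the arcs `(a q, b q)` whose left endpoint lies strictly under the arc
`(a r, b r)`; in an arc system these are the arcs nested inside it. -/
def arcsUnder [Fintype ι] (a b : ι → α) (r : ι) : Finset ι :=
  {q | r < q ∧ a q < b r}

end ArcSystem

section NestingCount

open Finset

variable {ι : Type*} [LinearOrder ι] {a b : ι → ℕ}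

/-- The unit cells `[a r, a r + 1]` and `[b r - 1, b r]` at the two ends of the arcs with index
in `T`, each cell `[t, t + 1]` being represented by `t`. -/
def endCells (a b : ι → ℕ) (T : Finset ι) : Finset ℕ :=
  T.image a ∪ T.image fun r => b r - 1

namespace IsArcSystem

theorem left_mem_Ico_iff [Fintype ι] (h : IsArcSystem a b) (q r : ι) :
    a q ∈ Ico (a r) (b r) ↔ q ∈ insert r (arcsUnder a b r) := by
  rw [mem_Ico, h.strictMono.le_iff_le, mem_insert]
  simp only [arcsUnder, mem_filter_univ]
  have := h.lt r
  grind

theorem pred_right_mem_Ico_iff [Fintype ι] (h : IsArcSystem a b) (q r : ι) :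
    b q - 1 ∈ Ico (a r) (b r) ↔ q ∈ insert r (arcsUnder a b r) := by
  rw [mem_Ico, mem_insert]
  simp only [arcsUnder, mem_filter_univ]
  have hq := h.lt q
  have hr := h.lt r
  rcases lt_trichotomy q r with hqr | rfl | hrq
  · have := h.strictMono hqr
    have := h.nested hqr
    grind
  · grind
  · have := h.strictMono hrq
    have := h.nested hrq
    grind

theorem left_ne_pred_right (h : IsArcSystem a b) (hlen : ∀ r, a r + 1 < b r) (q r : ι) :
    a q ≠ b r - 1 := by
  have hq := hlen q
  rcases lt_trichotomy q r with hqr | rfl | hrq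
  · have := h.strictMono hqr
    have := hlen r
    omega
  · omega
  · have := h.strictMono hrq
    have := h.nested hrq
    omega

theorem card_endCells (h : IsArcSystem a b) (hlen : ∀ r, a r + 1 < b r) (T : Finset ι) :
    (endCells a b T).card = 2 * T.card := by
  have hdisj : Disjoint (T.image a) (T.image fun r => b r - 1) := by
    simp only [disjoint_left, mem_image]
    rintro _ ⟨q, -, rfl⟩ ⟨r, -, hr⟩
    exact h.left_ne_pred_right hlen q r hr.symm
  have hpred : Function.Injective fun r => b r - 1 := fun q r hqr =>
    h.right_injective (by have := hlen q; have := hlen r; grind)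
  rw [endCells, card_union_of_disjoint hdisj, card_image_of_injective _ h.strictMono.injective,
    card_image_of_injective _ hpred, two_mul]

theorem endCells_univ_inter_Ico [Fintype ι] (h : IsArcSystem a b) (r : ι) :
    endCells a b univ ∩ Ico (a r) (b r) = endCells a b (insert r (arcsUnder a b r)) := by
  ext t
  have hleft := fun q => h.left_mem_Ico_iff q r
  have hright := fun q => h.pred_right_mem_Ico_iff q r
  simp only [endCells, mem_inter, mem_union, mem_image, mem_univ, true_and]
  grind

theorem two_mul_card_arcsUnder_add_two [Fintype ι] (h : IsArcSystem a b)
    (hpar : ∀ r, a r % 2 = b r % 2) {L R : ℕ} (hL : ∀ r, L ≤ a r) (hR : ∀ r, b r ≤ R)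
    (hLR : R ≤ L + 2 * Fintype.card ι + 1) (r : ι) :
    2 * (arcsUnder a b r).card + 2 = b r - a r := by
  have hlen : ∀ r, a r + 1 < b r := fun r => by
    have := h.lt r
    have := hpar r
    omega
  have hcells : endCells a b univ ⊆ Ico L R := by
    simp only [endCells, union_subset_iff, image_subset_iff, mem_Ico]
    constructor <;> intro q _ <;> have := hL q <;> have := hR q <;> have := hlen q <;> omega
  have hmissed : (Ico (a r) (b r) \ endCells a b univ).card ≤
      (Ico L R \ endCells a b univ).card :=
    card_le_card (sdiff_subset_sdiff (Ico_subset_Ico (hL r) (hR r)) le_rfl)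
  have hsplit := card_sdiff_add_card_inter (Ico (a r) (b r)) (endCells a b univ)
  have hr : r ∉ arcsUnder a b r := by simp [arcsUnder]
  rw [inter_comm, h.endCells_univ_inter_Ico, h.card_endCells hlen, card_insert_of_notMem hr,
    Nat.card_Ico] at hsplit
  rw [card_sdiff_of_subset hcells, h.card_endCells hlen, Nat.card_Ico, card_univ] at hmissed
  have := h.lt r
  have := hpar r
  omega

end IsArcSystem

theorem two_mul_card_Ioo_filter_mod_two_add_two {x y : ℕ} (hxy : x < y) (hpar : x % 2 = y % 2) :
    2 * ((Ioo x y).filter fun t => t % 2 = x % 2).card + 2 = y - x := by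
  have hfilter : (Ioo x y).filter (fun t => t % 2 = x % 2) =
      (range ((y - x) / 2 - 1)).image fun i => x + 2 + 2 * i := by
    ext t
    simp only [mem_filter, mem_Ioo, mem_image, mem_range]
    constructor
    · rintro ⟨⟨hxt, hty⟩, ht⟩
      exact ⟨(t - x) / 2 - 1, by omega, by omega⟩
    · rintro ⟨i, hi, rfl⟩
      omega
  rw [hfilter, card_image_of_injective _ fun i j hij => by simpa using hij, card_range]
  omega

end NestingCount

section Expansion

open Finset

variable {k : ℕ} {α : Type*} [LinearOrder α]

theorem strictMono_comp_sort {c : Fin k → α} (hc : Function.Injective c) :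
    StrictMono (c ∘ Tuple.sort c) :=
  (Tuple.monotone_sort c).strictMono_of_injective (hc.comp (Tuple.sort c).injective)

theorem sign_sort {c : Fin k → α} (hc : Function.Injective c) :
    Equiv.Perm.sign (Tuple.sort c) = ∏ q, ∏ r ∈ Ioi q, if c q < c r then 1 else -1 := by
  rw [← Equiv.Perm.sign_inv, Equiv.Perm.sign_eq_prod_prod_Ioi]
  have hlt (q r : Fin k) : (Tuple.sort c)⁻¹ q < (Tuple.sort c)⁻¹ r ↔ c q < c r := by
    simp [← (strictMono_comp_sort hc).lt_iff_lt]
  simp only [hlt]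

theorem coe_orderEmbOfFin_image {c : Fin k → α} (hc : Function.Injective c)
    (hcard : (univ.image c).card = k) :
    (univ.image c).orderEmbOfFin hcard = c ∘ Tuple.sort c :=
  (orderEmbOfFin_unique hcard (fun _ => mem_image_of_mem c (mem_univ _))
    (strictMono_comp_sort hc)).symm

theorem finsetWedge_image {n : ℕ} {c : Fin k → ℕ} (hc : Function.Injective c) :
    finsetWedge n k (univ.image c) =
      ExteriorAlgebra.ιMulti ℝ k (stdE n ∘ c ∘ Tuple.sort c) := by
  have hcard : (univ.image c).card = k := by
    rw [card_image_of_injective _ hc, card_univ, Fintype.card_fin]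
  rw [finsetWedge, ← coe_orderEmbOfFin_image hc hcard]
  congr! 2 with i
  rw [Function.comp_apply, orderEmbOfFin_apply, List.getD_eq_getElem]
  rfl

namespace IsArcSystem

variable {a b : Fin k → α}

theorem sign_sort_piecewise (h : IsArcSystem a b) {s : Finset (Fin k)}
    (hs : Function.Injective (s.piecewise a b)) :
    Equiv.Perm.sign (Tuple.sort (s.piecewise a b)) =
      ∏ r, s.piecewise 1 (fun r => (-1) ^ (arcsUnder a b r).card) r := by
  rw [sign_sort hs]
  refine prod_congr rfl fun q _ => ?_
  have hinv : ∀ r ∈ Ioi q,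
      (if s.piecewise a b q < s.piecewise a b r then (1 : ℤˣ) else -1) =
        if q ∈ s ∨ b q ≤ a r then 1 else -1 := fun r hr => by
    simp only [h.piecewise_lt_piecewise_iff hs (mem_Ioi.mp hr)]
  rw [prod_congr rfl hinv]
  by_cases hq : q ∈ s
  · simp [hq]
  · have hunder : arcsUnder a b q = (Ioi q).filter fun r => ¬ b q ≤ a r := by
      ext r
      simp [arcsUnder]
    simp [hq, hunder, prod_ite]

theorem map_add_neg_one_pow_smul {R M N : Type*} [CommRing R] [AddCommGroup M] [Module R M]
    [AddCommGroup N] [Module R N] (h : IsArcSystem a b) (f : M [⋀^Fin k]→ₗ[R] N) (v : α → M) :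
    f (fun r => v (a r) + (-1 : R) ^ (arcsUnder a b r).card • v (b r)) =
      ∑ s : Finset (Fin k) with Function.Injective (s.piecewise a b),
        f (v ∘ s.piecewise a b ∘ Tuple.sort (s.piecewise a b)) := by
  let ε : Fin k → R := fun r => (-1) ^ (arcsUnder a b r).card
  have hterm (s : Finset (Fin k)) : f (s.piecewise (v ∘ a) fun r => ε r • v (b r)) =
      (∏ r, s.piecewise 1 ε r) • f (v ∘ s.piecewise a b) := by
    rw [← AlternatingMap.coe_multilinearMap, ← MultilinearMap.map_smul_univ]
    congr! 2 with r
    by_cases hr : r ∈ s <;> simp [hr]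
  have hexpand := f.toMultilinearMap.map_add_univ (v ∘ a) fun r => ε r • v (b r)
  simp only [AlternatingMap.coe_multilinearMap, hterm] at hexpand
  rw [sum_filter]
  refine hexpand.trans (sum_congr rfl fun s _ => ?_)
  split_ifs with hs
  · have hsign : ((Equiv.Perm.sign (Tuple.sort (s.piecewise a b)) : ℤ) : R) =
        ∏ r, s.piecewise 1 ε r := by
      rw [h.sign_sort_piecewise hs]
      push_cast
      refine prod_congr rfl fun r _ => ?_
      by_cases hr : r ∈ s <;> simp [hr, ε]
    rw [← hsign, Int.cast_smul_eq_zsmul, ← Units.smul_def, ← f.map_perm]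
    rfl
  · rw [f.map_eq_zero_of_not_injective _ (fun hinj => hs hinj.of_comp), smul_zero]

end IsArcSystem

end Expansion

section Blocks

open Finset

variable {α : Type*}

theorem mem_zip_tail_iff {l : List α} {x y : α} :
    (x, y) ∈ l.zip l.tail ↔ ∃ (i : ℕ) (hi : i + 1 < l.length), l[i] = x ∧ l[i + 1] = y := by
  simp only [List.mem_iff_getElem, List.length_zip, List.length_tail, List.getElem_zip,
    List.getElem_tail, Prod.mk.injEq]
  constructor <;> rintro ⟨i, hi, hxy⟩ <;> exact ⟨i, by omega, hxy⟩

variable [LinearOrder α]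

theorem mem_zip_tail_iff_of_sortedLT {l : List α} (hl : l.SortedLT) {x y : α} :
    (x, y) ∈ l.zip l.tail ↔ x ∈ l ∧ y ∈ l ∧ x < y ∧ ∀ z ∈ l, z ≤ x ∨ y ≤ z := by
  have hmono := hl.strictMono_get
  rw [mem_zip_tail_iff]
  constructor
  · rintro ⟨i, hi, rfl, rfl⟩
    refine ⟨List.getElem_mem _, List.getElem_mem _, hmono (Fin.mk_lt_mk.mpr i.lt_succ_self), ?_⟩
    intro z hz
    obtain ⟨j, rfl⟩ := List.mem_iff_get.mp hz
    exact (Nat.lt_or_ge i j).symm.imp (fun hj => hmono.monotone hj) fun hj => hmono.monotone hj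
  · rintro ⟨hx, hy, hxy, hz⟩
    obtain ⟨i, rfl⟩ := List.mem_iff_get.mp hx
    obtain ⟨j, rfl⟩ := List.mem_iff_get.mp hy
    have hij : i.val < j := hmono.lt_iff_lt.mp hxy
    have hi : i.val + 1 < l.length := by omega
    have hnext : l.get j ≤ l[i.val + 1] :=
      (hz _ (List.getElem_mem hi)).resolve_left (hmono (Fin.mk_lt_mk.mpr i.val.lt_succ_self)).not_ge
    have hj : j.val ≤ i + 1 := hmono.le_iff_le (b := ⟨i + 1, hi⟩).mp hnext
    exact ⟨i, hi, rfl, by simp [show i.val + 1 = j by omega]⟩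

/-- `x < y` are consecutive elements of the block `B`: the pairs `(j_l, j_{l+1})` of the algorithm,
described without reference to the sorted list of elements of `B`. -/
structure IsConsecutiveIn (B : Finset α) (x y : α) : Prop where
  left_mem : x ∈ B
  right_mem : y ∈ B
  lt : x < y
  le_or_le : ∀ z ∈ B, z ≤ x ∨ y ≤ z

theorem mem_blockPairs_iff {B : Finset ℕ} {x y : ℕ} :
    (x, y) ∈ blockPairs B ↔ IsConsecutiveIn B x y := by
  rw [blockPairs, List.mem_toFinset, mem_zip_tail_iff_of_sortedLT B.sortedLT_sort]
  simp only [mem_sort]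
  exact ⟨fun ⟨hx, hy, hxy, hz⟩ => ⟨hx, hy, hxy, hz⟩,
    fun h => ⟨h.left_mem, h.right_mem, h.lt, h.le_or_le⟩⟩

theorem card_blockPairs (B : Finset ℕ) : (blockPairs B).card = B.card - 1 := by
  have hnodup : ((B.sort (· ≤ ·)).zip (B.sort (· ≤ ·)).tail).Nodup := by
    apply List.Nodup.of_map Prod.snd
    rw [List.map_snd_zip (by simp)]
    exact (B.sort_nodup _).tail
  rw [blockPairs, List.toFinset_card_of_nodup hnodup]
  simp

theorem mem_pairsOf_iff {P : Finset (Finset ℕ)} {x y : ℕ} :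
    (x, y) ∈ pairsOf P ↔ ∃ B ∈ P, IsConsecutiveIn B x y := by
  simp only [pairsOf, mem_sup, mem_blockPairs_iff]

namespace IsConsecutiveIn

variable {B : Finset α} {x y z : α}

theorem right_unique (hy : IsConsecutiveIn B x y) (hz : IsConsecutiveIn B x z) : y = z :=
  le_antisymm ((hy.le_or_le z hz.right_mem).resolve_left hz.lt.not_ge)
    ((hz.le_or_le y hy.right_mem).resolve_left hy.lt.not_ge)

theorem notMem_of_lt_of_lt (h : IsConsecutiveIn B x y) (hxz : x < z) (hzy : z < y) : z ∉ B :=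
  fun hz => (h.le_or_le z hz).elim hxz.not_ge hzy.not_ge

theorem piecewise_mem {ι : Type*} [DecidableEq ι] {a b : ι → α} {r : ι}
    (h : IsConsecutiveIn B (a r) (b r)) (s : Finset ι) : s.piecewise a b r ∈ B :=
  s.piecewise_cases a b (· ∈ B) h.left_mem h.right_mem

end IsConsecutiveIn

end Blocks

section Partitions

open Finset

variable {G H : Finset ℕ} {P Q : Finset (Finset ℕ)}

namespace IsPartitionOf

theorem block_nonempty (hP : IsPartitionOf G P) {B : Finset ℕ} (hB : B ∈ P) : B.Nonempty :=
  hP.1 B hB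

theorem block_subset (hP : IsPartitionOf G P) {B : Finset ℕ} (hB : B ∈ P) : B ⊆ G :=
  hP.2.1 B hB

theorem existsUnique_block (hP : IsPartitionOf G P) {x : ℕ} (hx : x ∈ G) :
    ∃! B, B ∈ P ∧ x ∈ B :=
  hP.2.2 x hx

theorem eq_of_mem_of_mem (hP : IsPartitionOf G P) {B C : Finset ℕ} (hB : B ∈ P) (hC : C ∈ P)
    {x : ℕ} (hxB : x ∈ B) (hxC : x ∈ C) : B = C :=
  (hP.existsUnique_block (hP.block_subset hB hxB)).unique ⟨hB, hxB⟩ ⟨hC, hxC⟩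

theorem sum_card (hP : IsPartitionOf G P) : ∑ B ∈ P, B.card = G.card :=
  (Finpartition.ofExistsUnique P (fun _ => hP.block_subset) (fun _ => hP.existsUnique_block)
    fun hempty => not_nonempty_empty (hP.block_nonempty hempty)).sum_card_parts

theorem disjoint (hP : IsPartitionOf G P) (hQ : IsPartitionOf H Q) (hGH : Disjoint G H) :
    Disjoint P Q := by
  refine disjoint_left.mpr fun B hBP hBQ => ?_
  obtain ⟨x, hx⟩ := hP.block_nonempty hBP
  exact disjoint_left.mp hGH (hP.block_subset hBP hx) (hQ.block_subset hBQ hx)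

theorem union (hP : IsPartitionOf G P) (hQ : IsPartitionOf H Q) (hGH : Disjoint G H) :
    IsPartitionOf (G ∪ H) (P ∪ Q) := by
  have hGH' := disjoint_left.mp hGH
  refine ⟨fun B hB => ?_, fun B hB => ?_, fun x hx => ?_⟩
  · exact (mem_union.mp hB).elim hP.block_nonempty hQ.block_nonempty
  · exact (mem_union.mp hB).elim
      (fun hB => (hP.block_subset hB).trans subset_union_left)
      (fun hB => (hQ.block_subset hB).trans subset_union_right)
  · rcases mem_union.mp hx with hx | hx
    · obtain ⟨B, ⟨hB, hxB⟩, huniq⟩ := hP.existsUnique_block hx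
      refine ⟨B, ⟨mem_union_left _ hB, hxB⟩, fun C ⟨hC, hxC⟩ => huniq C ⟨?_, hxC⟩⟩
      exact (mem_union.mp hC).resolve_right fun hC => hGH' hx (hQ.block_subset hC hxC)
    · obtain ⟨B, ⟨hB, hxB⟩, huniq⟩ := hQ.existsUnique_block hx
      refine ⟨B, ⟨mem_union_right _ hB, hxB⟩, fun C ⟨hC, hxC⟩ => huniq C ⟨?_, hxC⟩⟩
      exact (mem_union.mp hC).resolve_left fun hC => hGH' (hP.block_subset hC hxC) hx

theorem card_pairsOf_add_card (hP : IsPartitionOf G P) :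
    (pairsOf P).card + P.card = G.card := by
  have hdisj : (P : Set (Finset ℕ)).PairwiseDisjoint blockPairs := by
    refine fun B hB C hC hBC => disjoint_left.mpr fun ⟨x, y⟩ hxyB hxyC => hBC ?_
    exact hP.eq_of_mem_of_mem hB hC (mem_blockPairs_iff.mp hxyB).left_mem
      (mem_blockPairs_iff.mp hxyC).left_mem
  have hblock : ∀ B ∈ P, (blockPairs B).card + 1 = B.card := fun B hB => by
    rw [card_blockPairs, Nat.sub_add_cancel (hP.block_nonempty hB).card_pos]
  rw [pairsOf, sup_eq_biUnion, card_biUnion hdisj, card_eq_sum_ones P, ← sum_add_distrib,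
    sum_congr rfl hblock, hP.sum_card]

theorem injOn_fst_pairsOf (hP : IsPartitionOf G P) :
    Set.InjOn Prod.fst (pairsOf P : Set (ℕ × ℕ)) := by
  rintro ⟨x, y⟩ hy ⟨_, z⟩ hz rfl
  obtain ⟨B, hB, hxy⟩ := mem_pairsOf_iff.mp hy
  obtain ⟨C, hC, hxz⟩ := mem_pairsOf_iff.mp hz
  obtain rfl := hP.eq_of_mem_of_mem hB hC hxy.left_mem hxz.left_mem
  rw [hxy.right_unique hxz]

end IsPartitionOf

/-- The pairs `(a r, b r)` list the consecutive pairs of the blocks of `P` without repetition, in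
increasing order of their first coordinates. -/
structure EnumeratesPairs {ι : Type*} [LinearOrder ι] (P : Finset (Finset ℕ)) (a b : ι → ℕ) :
    Prop where
  strictMono : StrictMono a
  mem : ∀ r, (a r, b r) ∈ pairsOf P
  surj : ∀ p ∈ pairsOf P, ∃ r, (a r, b r) = p

namespace EnumeratesPairs

variable {ι : Type*} [LinearOrder ι] {a b : ι → ℕ}

theorem exists_block (hab : EnumeratesPairs P a b) (r : ι) :
    ∃ B ∈ P, IsConsecutiveIn B (a r) (b r) :=
  mem_pairsOf_iff.mp (hab.mem r)

theorem isArcSystem (hab : EnumeratesPairs P a b) (hP : IsPartitionOf G P)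
    (hnc : NonCrossing P) : IsArcSystem a b where
  strictMono := hab.strictMono
  lt r := by
    obtain ⟨B, -, hB⟩ := hab.exists_block r
    exact hB.lt
  nested q r hqr hlt := by
    obtain ⟨B, hBP, hB⟩ := hab.exists_block q
    obtain ⟨C, hCP, hC⟩ := hab.exists_block r
    by_contra! hle
    have hBC : B = C := by
      rcases hle.eq_or_lt with heq | hcross
      · exact hP.eq_of_mem_of_mem hBP hCP hB.right_mem (heq ▸ hC.right_mem)
      · exact hnc _ _ _ _ (hab.strictMono hqr) hlt hcross B hBP C hCP
          hB.left_mem hB.right_mem hC.left_mem hC.right_mem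
    exact hB.notMem_of_lt_of_lt (hab.strictMono hqr) hlt (hBC ▸ hC.left_mem)

variable [Fintype ι]

theorem card_filter_mem_blockPairs (hab : EnumeratesPairs P a b) {B : Finset ℕ} (hB : B ∈ P) :
    (univ.filter fun r => (a r, b r) ∈ blockPairs B).card = B.card - 1 := by
  have hinj : Function.Injective fun r => (a r, b r) := fun q r hqr =>
    hab.strictMono.injective (Prod.ext_iff.mp hqr).1
  rw [← card_blockPairs, ← card_image_of_injective _ hinj]
  congr 1
  ext p
  simp only [mem_image, mem_filter_univ]
  constructor
  · rintro ⟨r, hr, rfl⟩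
    exact hr
  · intro hp
    obtain ⟨r, rfl⟩ := hab.surj p (mem_sup.mpr ⟨B, hB, hp⟩)
    exact ⟨r, hp, rfl⟩

theorem card_sdiff_image_piecewise (hab : EnumeratesPairs P a b) (hP : IsPartitionOf G P)
    {s : Finset ι} (hs : Function.Injective (s.piecewise a b)) {B : Finset ℕ} (hB : B ∈ P) :
    (B \ univ.image (s.piecewise a b)).card = 1 := by
  have hinter : B ∩ univ.image (s.piecewise a b) =
      (univ.filter fun r => (a r, b r) ∈ blockPairs B).image (s.piecewise a b) := by
    ext x
    simp only [mem_inter, mem_image, mem_filter_univ, mem_univ, true_and, mem_blockPairs_iff]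
    constructor
    · rintro ⟨hx, r, rfl⟩
      obtain ⟨C, hC, hr⟩ := hab.exists_block r
      obtain rfl := hP.eq_of_mem_of_mem hC hB (hr.piecewise_mem s) hx
      exact ⟨r, hr, rfl⟩
    · rintro ⟨r, hr, rfl⟩
      exact ⟨hr.piecewise_mem s, r, rfl⟩
  have hcard := card_sdiff_add_card_inter B (univ.image (s.piecewise a b))
  rw [hinter, card_image_of_injective _ hs, hab.card_filter_mem_blockPairs hB] at hcard
  have := (hP.block_nonempty hB).card_pos
  omega

theorem image_piecewise_mem_powersetCard (hab : EnumeratesPairs P a b) (hP : IsPartitionOf G P)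
    {s : Finset ι} (hs : Function.Injective (s.piecewise a b)) :
    univ.image (s.piecewise a b) ∈ G.powersetCard (Fintype.card ι) := by
  rw [mem_powersetCard, card_image_of_injective _ hs, card_univ, image_subset_iff]
  refine ⟨fun r _ => ?_, rfl⟩
  obtain ⟨B, hB, hr⟩ := hab.exists_block r
  exact hP.block_subset hB (hr.piecewise_mem s)

theorem exists_image_piecewise_eq (hab : EnumeratesPairs P a b) (hP : IsPartitionOf G P)
    (harc : IsArcSystem a b) {I : Finset ℕ} (hcard : I.card = Fintype.card ι)
    (hI : ∀ B ∈ P, (B \ I).card = 1) :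
    ∃ s : Finset ι, Function.Injective (s.piecewise a b) ∧ univ.image (s.piecewise a b) = I := by
  choose block hblock hcons using hab.exists_block
  choose missing hmissing using fun r => card_eq_one.mp (hI _ (hblock r))
  let s : Finset ι := {r | a r < missing r}
  have hmem (r : ι) : s.piecewise a b r ∈ block r := (hcons r).piecewise_mem s
  have hs (r : ι) : s.piecewise a b r = if a r < missing r then a r else b r := by
    simp [s, piecewise]
  have hinj : Function.Injective (s.piecewise a b) := by
    intro q r hqr
    have hblocks : block q = block r :=
      hP.eq_of_mem_of_mem (hblock q) (hblock r) (hmem q) (hqr ▸ hmem r)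
    have hmissing_eq : missing q = missing r := by
      rw [← singleton_inj, ← hmissing, ← hmissing, hblocks]
    have hq := harc.lt q
    have hr := harc.lt r
    rw [hs, hs] at hqr
    split_ifs at hqr
    · exact hab.strictMono.injective hqr
    · omega
    · omega
    · exact harc.right_injective hqr
  refine ⟨s, hinj, eq_of_subset_of_card_le (fun x hx => ?_) ?_⟩
  · obtain ⟨r, -, rfl⟩ := mem_image.mp hx
    by_contra hxI
    have hchosen : s.piecewise a b r = missing r := by
      rw [← mem_singleton, ← hmissing, mem_sdiff]
      exact ⟨hmem r, hxI⟩
    have := harc.lt r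
    rw [hs] at hchosen
    split_ifs at hchosen <;> omega
  · rw [hcard, card_image_of_injective _ hinj, card_univ]

end EnumeratesPairs

end Partitions

section ConcordanceVector

open Finset

variable {n : ℕ} {σ σd : Finset (Finset ℕ)}

theorem mem_oddSet {x : ℕ} : x ∈ oddSet n ↔ x ≤ 2 * n ∧ x % 2 = 1 := by
  simp only [oddSet, mem_image, mem_range]
  exact ⟨by rintro ⟨k, hk, rfl⟩; omega, fun hx => ⟨x / 2, by omega, by omega⟩⟩

theorem mem_evenSet {x : ℕ} : x ∈ evenSet n ↔ 0 < x ∧ x ≤ 2 * n ∧ x % 2 = 0 := by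
  simp only [evenSet, mem_image, mem_range]
  exact ⟨by rintro ⟨k, hk, rfl⟩; omega, fun hx => ⟨x / 2 - 1, by omega, by omega⟩⟩

theorem disjoint_oddSet_evenSet (n : ℕ) : Disjoint (oddSet n) (evenSet n) :=
  disjoint_left.mpr fun x hodd heven => by
    rw [mem_oddSet] at hodd
    rw [mem_evenSet] at heven
    omega

theorem oddSet_union_evenSet (n : ℕ) : oddSet n ∪ evenSet n = Icc 1 (2 * n) := by
  ext x
  rw [mem_union, mem_oddSet, mem_evenSet, mem_Icc]
  omega

namespace IsNCPair

theorem isPartitionOf_union (h : IsNCPair n σ σd) :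
    IsPartitionOf (Icc 1 (2 * n)) (σ ∪ σd) := by
  rw [← oddSet_union_evenSet]
  obtain ⟨hσ, -, hσd, -⟩ := h
  exact hσ.union hσd (disjoint_oddSet_evenSet n)

theorem nonCrossing_union (h : IsNCPair n σ σd) : NonCrossing (σ ∪ σd) :=
  h.2.2.2.2.1

theorem card_union (h : IsNCPair n σ σd) : (σ ∪ σd).card = n + 1 := by
  obtain ⟨hσ, -, hσd, -, -, hcard⟩ := h
  rw [card_union_of_disjoint (hσ.disjoint hσd (disjoint_oddSet_evenSet n)), hcard]

theorem card_pairsOf_union (h : IsNCPair n σ σd) : (pairsOf (σ ∪ σd)).card = n - 1 := by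
  have hcard := h.isPartitionOf_union.card_pairsOf_add_card
  rw [h.card_union, Nat.card_Icc] at hcard
  omega

theorem mod_two_eq (h : IsNCPair n σ σd) {B : Finset ℕ} (hB : B ∈ σ ∪ σd) {x y : ℕ}
    (hx : x ∈ B) (hy : y ∈ B) : x % 2 = y % 2 := by
  obtain ⟨hσ, -, hσd, -⟩ := h
  rcases mem_union.mp hB with hB | hB
  · have hsub := hσ.block_subset hB
    rw [(mem_oddSet.mp (hsub hx)).2, (mem_oddSet.mp (hsub hy)).2]
  · have hsub := hσd.block_subset hB
    rw [(mem_evenSet.mp (hsub hx)).2.2, (mem_evenSet.mp (hsub hy)).2.2]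

variable {a b : Fin (n - 1) → ℕ}

theorem isArcSystem (h : IsNCPair n σ σd) (hab : EnumeratesPairs (σ ∪ σd) a b) :
    IsArcSystem a b :=
  hab.isArcSystem h.isPartitionOf_union h.nonCrossing_union

theorem card_Ioo_filter_mod_two_eq_card_arcsUnder (h : IsNCPair n σ σd)
    (hab : EnumeratesPairs (σ ∪ σd) a b) (r : Fin (n - 1)) :
    ((Ioo (a r) (b r)).filter fun t => t % 2 = a r % 2).card = (arcsUnder a b r).card := by
  have harc := h.isArcSystem hab
  have hpar (r : Fin (n - 1)) : a r % 2 = b r % 2 := by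
    obtain ⟨B, hB, hr⟩ := hab.exists_block r
    exact h.mod_two_eq hB hr.left_mem hr.right_mem
  have hbounds (r : Fin (n - 1)) : 1 ≤ a r ∧ b r ≤ 2 * n := by
    obtain ⟨B, hB, hr⟩ := hab.exists_block r
    have hsub := h.isPartitionOf_union.block_subset hB
    exact ⟨(mem_Icc.mp (hsub hr.left_mem)).1, (mem_Icc.mp (hsub hr.right_mem)).2⟩
  have hunder := harc.two_mul_card_arcsUnder_add_two hpar (fun r => (hbounds r).1)
    (fun r => (hbounds r).2) (by rw [Fintype.card_fin]; omega) r
  have hsame := two_mul_card_Ioo_filter_mod_two_add_two (harc.lt r) (hpar r)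
  omega

theorem filter_concordantWith_eq_image (h : IsNCPair n σ σd) (hab : EnumeratesPairs (σ ∪ σd) a b) :
    ((Icc 1 (2 * n)).powersetCard (n - 1)).filter (ConcordantWith σ σd) =
      (univ.filter fun s : Finset (Fin (n - 1)) =>
        Function.Injective (s.piecewise a b)).image fun s => univ.image (s.piecewise a b) := by
  have hP := h.isPartitionOf_union
  ext I
  simp only [mem_filter, mem_image, mem_univ, true_and]
  constructor
  · rintro ⟨hI, hconc⟩
    refine hab.exists_image_piecewise_eq hP (h.isArcSystem hab) ?_ hconc
    rw [(mem_powersetCard.mp hI).2, Fintype.card_fin]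
  · rintro ⟨s, hs, rfl⟩
    refine ⟨?_, fun B hB => hab.card_sdiff_image_piecewise hP hs hB⟩
    simpa only [Fintype.card_fin] using hab.image_piecewise_mem_powersetCard hP hs

theorem concVec_eq_sum (h : IsNCPair n σ σd) (hab : EnumeratesPairs (σ ∪ σd) a b) :
    concVec n σ σd = ∑ s : Finset (Fin (n - 1)) with Function.Injective (s.piecewise a b),
      ExteriorAlgebra.ιMulti ℝ (n - 1)
        (stdE n ∘ s.piecewise a b ∘ Tuple.sort (s.piecewise a b)) := by
  rw [concVec, h.filter_concordantWith_eq_image hab, sum_image]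
  · exact sum_congr rfl fun s hs => finsetWedge_image (mem_filter.mp hs).2
  · simpa using (h.isArcSystem hab).injOn_image_piecewise

end IsNCPair

end ConcordanceVector

theorem algorithm_for_concordance_vectors (n : ℕ) (hn : 2 ≤ n)
    (σ σd : Finset (Finset ℕ)) (h : IsNCPair n σ σd) :
    (pairsOf (σ ∪ σd)).card = n - 1 ∧
    (∀ p ∈ pairsOf (σ ∪ σd), ∀ q ∈ pairsOf (σ ∪ σd), p.1 = q.1 → p = q) ∧
    ∀ a b : Fin (n - 1) → ℕ, StrictMono a →
      (∀ r, (a r, b r) ∈ pairsOf (σ ∪ σd)) →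
      (∀ p ∈ pairsOf (σ ∪ σd), ∃ r, (a r, b r) = p) →
      concVec n σ σd =
        ExteriorAlgebra.ιMulti ℝ (n - 1) fun r =>
          stdE n (a r) +
            ((-1 : ℝ) ^ ((Finset.Ioo (a r) (b r)).filter
                (fun t => t % 2 = (a r) % 2)).card) • stdE n (b r) := by
  refine ⟨h.card_pairsOf_union, fun p hp q hq => h.isPartitionOf_union.injOn_fst_pairsOf hp hq, ?_⟩
  intro a b ha hmem hsurj
  have hab : EnumeratesPairs (σ ∪ σd) a b := ⟨ha, hmem, hsurj⟩
  simp only [h.card_Ioo_filter_mod_two_eq_card_arcsUnder hab]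
  rw [h.concVec_eq_sum hab, (h.isArcSystem hab).map_add_neg_one_pow_smul]
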